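/- Fix a rank n ≥ 2 and an integer M ≥ 1. Let J, L, I, K ∈ ℕ^n satisfy I + J = K + L componentwise, |J| ≤ M, |L| ≤ M, and J_n + |L| - L_n ≤ M. Then the fused vertex weights satisfy the recurrence 𝓛^{J,L}_{I,K}(x, M) = b^{J_n, L_n}_{I_n, K_n}(x, -t^M x; |L|) · 𝓛^{Ĵ,L̂}_{Î,K̂}(t^{J_n} x, M - J_n), as elements of ℚ(t)[x], where Ĵ := (J_1,…,J_{n-1}) and similarly for L̂, Î, K̂ (the rank n-1 truncations), and for nonnegative integers p, q, p', q' and an integer w, b^{p,q}_{p',q'}(x,z;w) := ∑_{k=0}^{q} t^{k(k-1)/2 + (w-q)(q'+k-p)} · C(q'+k, k)_t · C(p', q-k)_t · x^k z^{q-k}. -/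

import Mathlib

/-!
The recurrence comes from a closed product formula: whenever `|J|, |L| ≤ M` and
`I + J = K + L`,

  `𝓛^{J,L}_{I,K}(x, M) = ∏_{k=1}^n t^{v_k (K_k - J_k)} ∑_r t^{r(r-1)/2} C(K_k + r, r)_t`
    `C(I_k, L_k - r)_t (t^{v_k + J_{k+1} + ⋯ + J_n} x)^r (-t^M x)^{L_k - r}`,

where `v_k = L_1 + ⋯ + L_{k-1}` (`Wf` below). Its factor for `k = n` is exactly
`b^{J_n, L_n}_{I_n, K_n}(x, -t^M x; |L|)`, and the remaining factors are the product formula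
of rank `n - 1` at the point `t^{J_n} x` with `M - J_n` vertices, the hypothesis
`J_n + |L| - L_n ≤ M` being what makes that formula applicable.

The product formula is proved by removing the first vertex, by induction on `M`. Summing over
both words at once does not give a closed recursion, so the stronger lemma `exchange` fixes the
outgoing word `ℓ` and sums over incoming words only: up to the factor `t^{-𝓘(rev ℓ)}`, the result
depends on `ℓ` only through its content, and it equals the product formula times a quotient of
`t⁻¹`-factorials. Summing over `ℓ` then produces `C_M(J)` because `C_M` is a
`t⁻¹`-multinomial coefficient (`CF_mul`).

The inductive step (`Wf_step`) says that for each fixed first outgoing letter `i`, averaging the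
product formula for `M - 1` vertices over the first incoming letter `c` returns the product
formula for `M`. When the letter `c` is removed, the factors of the colours `k < min(c, i)` do not
change, while those with `c ≤ k < i` change in a way independent of `c` except at `k = c`; hence
the sum over `c` telescopes (`telescope`) as soon as each colour satisfies one three-term
contiguity relation, `be_rel_zero`. For `i = 0` this is everything; for `i ≥ 1` the factor of
colour `i` needs a second contiguity relation, `be_rel_pos`, and the colours above `i` only
contribute a power of `t`. Both contiguity relations are proved termwise from the Pascal rule
for Gaussian binomials.

All computations take place over a field, in which `ℚ(t)[x]` is embedded through its fraction
field.
-/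

open Finset

noncomputable section

attribute [local instance] Classical.propDecidable

/-- The Gaussian binomial coefficient `C(a,b)_t` for natural arguments,
as a polynomial in `t` (it vanishes when `b > a`). -/
def gaussNat : ℕ → ℕ → Polynomial ℤ
  | _, 0 => 1
  | 0, _ + 1 => 0
  | a + 1, b + 1 => gaussNat a b + Polynomial.X ^ (b + 1) * gaussNat a (b + 1)

/-- The Gaussian binomial coefficient `C(a,b)_t ∈ ℤ[t]`, set to `0` unless `a ≥ b ≥ 0`. -/
def gaussInt (a b : ℤ) : Polynomial ℤ :=
  if 0 ≤ b ∧ b ≤ a then gaussNat a.toNat b.toNat else 0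

/-- The words in `{0,…,n}^M` with content `J`. -/
def wrd (n M : ℕ) (J : ℕ → ℕ) : Finset (Fin M → ℕ) :=
  (Fintype.piFinset fun _ : Fin M => Finset.range (n + 1)).filter fun w =>
    ∀ a ∈ Finset.Icc 1 n, (Finset.univ.filter fun s => w s = a).card = J a

/-- The inversion number `𝓘(w) = #{(a,b) : a < b, w_a < w_b}`. -/
def invNum (M : ℕ) (w : Fin M → ℕ) : ℕ :=
  (Finset.univ.filter fun p : Fin M × Fin M => p.1 < p.2 ∧ w p.1 < w p.2).card

/-- The reversed word `rev(w) = (w_M, …, w_1)`. -/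
def wrev (M : ℕ) (w : Fin M → ℕ) : Fin M → ℕ := fun s => w s.rev

/-- The intermediate occupation vector `I^s = I + ∑_{r ≤ s} (e_{j_r} - e_{ℓ_r})`. -/
def Istep (M : ℕ) (I : ℕ → ℕ) (j l : Fin M → ℕ) (s a : ℕ) : ℤ :=
  (I a : ℤ) + ∑ r : Fin M,
    (if (r : ℕ) < s then
      ((if a = j r then 1 else 0) - (if a = l r then 1 else 0)) else 0)

/-- The vertex weight `L^{j,i}_{I,K}(x)`.  Here `tpow m` represents `t^m`. -/
def Lw {R : Type*} [CommRing R] (tpow : ℤ → R) (n : ℕ) (Ib It : ℕ → ℤ) (j i : ℕ)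
    (xv : R) : R :=
  if ∀ a ∈ Finset.Icc 1 n,
      Ib a + (if a = j then 1 else 0) = It a + (if a = i then 1 else 0) then
    if i = 0 then 1
    else if j = i then xv * tpow (∑ a ∈ Finset.Icc (i + 1) n, Ib a)
    else if j < i then xv * (1 - tpow (Ib i)) * tpow (∑ a ∈ Finset.Icc (i + 1) n, Ib a)
    else 0
  else 0

/-- `Π(j, ℓ; I, K; x) = ∏_{s=1}^M L^{j_s,ℓ_s}_{I^{s-1},I^s}(t^{s-1} x)`, which is `0`
unless every `I^s` lies in `ℕ^n` and `I^M = K`. -/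
def Pprod {R : Type*} [CommRing R] (tpow : ℤ → R) (n M : ℕ) (j l : Fin M → ℕ)
    (I K : ℕ → ℕ) (xv : R) : R :=
  if (∀ s ∈ Finset.range (M + 1), ∀ a ∈ Finset.Icc 1 n, 0 ≤ Istep M I j l s a) ∧
      (∀ a ∈ Finset.Icc 1 n, Istep M I j l M a = (K a : ℤ)) then
    ∏ s : Fin M,
      Lw tpow n (Istep M I j l s) (Istep M I j l ((s : ℕ) + 1)) (j s) (l s)
        (tpow (s : ℕ) * xv)
  else 0

/-- The function `b^{p,q}_{p',q'}(x,z;w)`. -/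
def bfun {R : Type*} [CommRing R] (tpow : ℤ → R) (gb : ℤ → ℤ → R) (p q p' q' : ℕ)
    (xv zv : R) (w : ℤ) : R :=
  ∑ k ∈ Finset.range (q + 1),
    tpow (((k : ℤ) * ((k : ℤ) - 1)) / 2 + (w - (q : ℤ)) * ((q' : ℤ) + (k : ℤ) - (p : ℤ))) *
      gb ((q' : ℤ) + (k : ℤ)) (k : ℤ) * gb (p' : ℤ) ((q : ℤ) - (k : ℤ)) *
      xv ^ k * zv ^ (q - k)

/-- The Gaussian binomial coefficient as an element of `ℚ(t)`. -/
def gq (a b : ℤ) : RatFunc ℚ :=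
  algebraMap (Polynomial ℚ) (RatFunc ℚ) ((gaussInt a b).map (Int.castRingHom ℚ))

/-- `t^m` as a constant of `ℚ(t)[x]`. -/
def tpowP (m : ℤ) : Polynomial (RatFunc ℚ) := Polynomial.C ((RatFunc.X : RatFunc ℚ) ^ m)

def gbP (a b : ℤ) : Polynomial (RatFunc ℚ) := Polynomial.C (gq a b)

/-- The normalization `C_M(J) = ∑_{j : m(j) = J} t^{-𝓘(rev j)} ∈ ℚ(t)`. -/
def CJq (n M : ℕ) (J : ℕ → ℕ) : RatFunc ℚ :=
  ∑ j ∈ wrd n M J, (RatFunc.X : RatFunc ℚ) ^ (-(invNum M (wrev M j) : ℤ))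

/-- The fused vertex weight `𝓛^{J,L}_{I,K}(x, M) ∈ ℚ(t)[x]`, with spectral parameter `xv`. -/
def Lfused (n M : ℕ) (J L I K : ℕ → ℕ) (xv : Polynomial (RatFunc ℚ)) :
    Polynomial (RatFunc ℚ) :=
  Polynomial.C (CJq n M J)⁻¹ *
    ∑ j ∈ wrd n M J, ∑ l ∈ wrd n M L,
      Polynomial.C ((RatFunc.X : RatFunc ℚ) ^ (-(invNum M (wrev M j) : ℤ))) *
        Pprod tpowP n M j l I K xv

/-! ### Gaussian binomials and one-colour sums -/

section Gauss

variable {F : Type*} [Field F] (t : F)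

/-- The value at `t` of the Gaussian binomial coefficient `C(a,b)_t`, defined by the `t`-Pascal
rule. -/
def gv : ℕ → ℕ → F
  | _, 0 => 1
  | 0, _ + 1 => 0
  | a + 1, b + 1 => gv a b + t ^ (b + 1) * gv a (b + 1)

lemma gv_zero_right (a : ℕ) : gv t a 0 = 1 := by cases a <;> rfl

lemma gv_succ_succ (a b : ℕ) :
    gv t (a + 1) (b + 1) = gv t a b + t ^ (b + 1) * gv t a (b + 1) := rfl

lemma gv_eq_zero (a b : ℕ) (h : a < b) : gv t a b = 0 := by
  induction a generalizing b with
  | zero => obtain ⟨b, rfl⟩ := Nat.exists_eq_add_of_lt h; simp [gv]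
  | succ a ih =>
    obtain ⟨b, rfl⟩ : ∃ c, b = c + 1 := ⟨b - 1, by omega⟩
    rw [gv_succ_succ, ih b (by omega), ih (b + 1) (by omega)]; simp

/-- `(1 - t^{b+1}) C(a+1, b+1)_t = (1 - t^{a+1}) C(a, b)_t`. -/
lemma gv_absorb (a b : ℕ) :
    (1 - t ^ (b + 1)) * gv t (a + 1) (b + 1) = (1 - t ^ (a + 1)) * gv t a b := by
  induction a generalizing b with
  | zero =>
    cases b with
    | zero => simp [gv]
    | succ b => simp [gv]
  | succ a ih =>
    cases b with
    | zero =>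
      have h := ih 0
      rw [gv_succ_succ t (a + 1) 0]
      simp only [gv_zero_right] at h ⊢
      linear_combination t * h
    | succ b =>
      have h1 := ih b
      have h2 := ih (b + 1)
      rw [gv_succ_succ t (a + 1) (b + 1)]
      have h3 := gv_succ_succ t a b
      linear_combination t ^ (b + 2) * h2 - t * (1 - t ^ (a + 1)) * h3 + t * h1

/-- The other contiguity of Gaussian binomials. The exponent `a - b` is encoded through
`m - p = a - b`, which avoids negative powers of `t`. -/
lemma gv_lower (ht : t ≠ 0) (a b p m : ℕ) (h : m + b = a + p) :
    (1 - t ^ (b + 1)) * t ^ p * gv t a (b + 1) = (t ^ p - t ^ m) * gv t a b := by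
  rcases lt_or_ge a b with hab | hab
  · rw [gv_eq_zero t a b hab, gv_eq_zero t a (b + 1) (by omega)]; simp
  · obtain ⟨d, rfl⟩ := Nat.exists_eq_add_of_le hab
    obtain rfl : m = d + p := by omega
    have h1 := gv_absorb t (b + d) b
    rw [gv_succ_succ] at h1
    have h2 : t ^ (b + 1) ≠ 0 := pow_ne_zero _ ht
    apply mul_left_cancel₀ h2
    linear_combination t ^ p * h1

lemma gv_pred (a b : ℕ) :
    (1 - t ^ a) * gv t (a - 1) b = (1 - t ^ (b + 1)) * gv t a (b + 1) := by
  cases a with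
  | zero => simp [gv]
  | succ a => rw [gv_absorb]; simp

lemma gv_pred' (ht : t ≠ 0) (a b p m : ℕ) (h : m + b = a + p) :
    (1 - t ^ a) * t ^ p * gv t (a - 1) b = (t ^ p - t ^ m) * gv t a b := by
  rw [← gv_lower t ht a b p m h, mul_right_comm, gv_pred]; ring

/-- The coefficient `t^{k(k-1)/2} C(c+k,k)_t`. -/
def ec (c k : ℕ) : F := t ^ (k.choose 2) * gv t (c + k) k

lemma ec_succ (c k : ℕ) :
    (1 - t ^ (k + 1)) * ec t c (k + 1) = t ^ k * (1 - t ^ (c + k + 1)) * ec t c k := by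
  have h := gv_absorb t (c + k) k
  have h2 : (k + 1).choose 2 = k + k.choose 2 := by
    rw [Nat.choose_succ_succ' k 1]; simp
  rw [ec, ec, h2, pow_add, ← add_assoc]
  linear_combination t ^ k * t ^ k.choose 2 * h

/-- The one-colour sum `∑_k t^{k(k-1)/2} C(c+k,k)_t C(a,q-k)_t y^k z^{q-k}`. For `y = t^{w-q} x` it
is `b^{p,q}_{a,c}(x, z; w)` without the power `t^{(w-q)(c-p)}`. -/
def be (q a c : ℕ) (y z : F) : F :=
  ∑ k ∈ range (q + 1), ec t c k * gv t a (q - k) * y ^ k * z ^ (q - k)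

/-- The contiguity relation for a colour smaller than the outgoing letter, or for any colour
when the outgoing edge is empty. The three summands of index `k` differ by `U (k + 1) - U k`, so
the relation holds by telescoping in `k`. -/
lemma be_rel_zero (ht : t ≠ 0) (p q a c : ℕ) (h : p + a = q + c) (y z W T : F)
    (hT : T * y = -(W * z)) :
    (W * t ^ q - T) * be t q a c y z =
      (W * t ^ p - T) * be t q a c (t * y) z + (1 - t ^ p) * W * be t q (a + 1) c (t * y) z := by
  set U : ℕ → F := fun k =>
    (1 - t ^ k) * T * (ec t c k * gv t a (q - k) * y ^ k * z ^ (q - k)) with hU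
  rw [← sub_eq_zero]
  simp only [be, mul_sum, ← sum_add_distrib, ← sum_sub_distrib]
  rw [sum_range_succ]
  have key : ∀ k ∈ range q,
      (W * t ^ q - T) * (ec t c k * gv t a (q - k) * y ^ k * z ^ (q - k)) -
        ((W * t ^ p - T) * (ec t c k * gv t a (q - k) * (t * y) ^ k * z ^ (q - k)) +
          (1 - t ^ p) * W * (ec t c k * gv t (a + 1) (q - k) * (t * y) ^ k * z ^ (q - k))) =
      U (k + 1) - U k := by
    intro k hk
    obtain ⟨r, rfl⟩ : ∃ r, q = k + (r + 1) := ⟨q - k - 1, by have := mem_range.1 hk; omega⟩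
    have e1 : k + (r + 1) - k = r + 1 := by omega
    have e2 : k + (r + 1) - (k + 1) = r := by omega
    simp only [hU, e1, e2]
    have h1 := ec_succ t c k
    have h2 := gv_succ_succ t a r
    have h3 := gv_lower t ht a r p (c + k + 1) (by omega)
    rw [h2]
    simp only [mul_pow, pow_succ y k, pow_succ z r]
    linear_combination (-(gv t a r * y ^ k * z ^ r * (T * y))) * h1
      - (t ^ k * (1 - t ^ (c + k + 1)) * ec t c k * gv t a r * y ^ k * z ^ r) * hT
      - (W * t ^ k * ec t c k * y ^ k * z ^ r * z) * h3
  rw [sum_congr rfl key, sum_range_sub]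
  simp only [hU, Nat.sub_self, gv_zero_right, mul_pow]
  ring

/-- The contiguity relation for the colour of the outgoing letter, which lowers `q + 1` to `q`. The
first summand on the right comes from a smaller incoming letter, the second from an incoming letter
of the same colour. -/
lemma be_rel_pos (ht : t ≠ 0) (p q a c : ℕ) (h : p + a = q + 1 + c) (y z : F) :
    (1 - t ^ (q + 1)) * be t (q + 1) a c y z =
      (1 - t ^ a) * (y * t ^ p + z) * be t q (a - 1) c (t * y) z +
        (1 - t ^ p) * y * be t q a c (t * y) z := by
  have key : ∀ k ∈ range (q + 1),
      (1 - t ^ a) * (y * t ^ p + z) *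
          (ec t c k * gv t (a - 1) (q - k) * (t * y) ^ k * z ^ (q - k)) +
        (1 - t ^ p) * y * (ec t c k * gv t a (q - k) * (t * y) ^ k * z ^ (q - k)) =
      (1 - t ^ (k + 1)) *
          (ec t c (k + 1) * gv t a (q + 1 - (k + 1)) * y ^ (k + 1) * z ^ (q + 1 - (k + 1))) +
        (t ^ k - t ^ (q + 1)) *
          (ec t c k * gv t a (q + 1 - k) * y ^ k * z ^ (q + 1 - k)) := by
    intro k hk
    obtain ⟨r, rfl⟩ : ∃ r, q = k + r := ⟨q - k, by have := mem_range.1 hk; omega⟩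
    have e1 : k + r - k = r := by omega
    have e2 : k + r + 1 - (k + 1) = r := by omega
    have e3 : k + r + 1 - k = r + 1 := by omega
    simp only [e1, e2, e3]
    have h1 := ec_succ t c k
    have h2 := gv_pred t a r
    have h3 := gv_pred' t ht a r p (c + k + 1) (by omega)
    simp only [mul_pow, pow_succ y k, pow_succ z r]
    linear_combination (-(gv t a r * y ^ k * z ^ r * y)) * h1
      + (t ^ k * ec t c k * y ^ k * z ^ r * z) * h2
      + (y * t ^ k * ec t c k * y ^ k * z ^ r) * h3
  simp only [be]
  rw [mul_sum (range (q + 1)), mul_sum (range (q + 1)), ← sum_add_distrib, sum_congr rfl key,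
    sum_add_distrib]
  have hA := sum_range_succ' (fun k => (1 - t ^ k) *
    (ec t c k * gv t a (q + 1 - k) * y ^ k * z ^ (q + 1 - k))) (q + 1)
  have hB := sum_range_succ (fun k => (t ^ k - t ^ (q + 1)) *
    (ec t c k * gv t a (q + 1 - k) * y ^ k * z ^ (q + 1 - k))) (q + 1)
  simp only [pow_zero, sub_self, zero_mul, add_zero] at hA hB
  rw [← hA, ← hB, ← sum_add_distrib, mul_sum]
  exact sum_congr rfl fun k _ => by ring

end Gauss

/-! ### The product formula and its one-vertex recursion -/

section Step

variable {F : Type*} [Field F] (t : F)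

/-- `J - e_c`, meaningful when `J c ≥ 1` (the subtraction is truncated). -/
def dec (J : ℕ → ℕ) (c a : ℕ) : ℕ := J a - if a = c then 1 else 0

/-- `I + e_c - e_i` on the colours `a ≥ 1` (the value at `0` plays no role). The subtraction is
truncated only when `i ≠ c` and `I i = 0`, and then the vertex weight `lam` is zero. -/
def stepI (I : ℕ → ℕ) (c i a : ℕ) : ℕ :=
  I a + (if a = c then 1 else 0) - (if a = i then 1 else 0)

lemma sum_dec (s : Finset ℕ) (J : ℕ → ℕ) (c : ℕ) (hc : 1 ≤ J c) :
    ∑ a ∈ s, dec J c a + (if c ∈ s then 1 else 0) = ∑ a ∈ s, J a := by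
  have h1 : ∀ a ∈ s, J a = dec J c a + if a = c then 1 else 0 := by
    intro a _
    unfold dec
    split_ifs with h
    · subst h; omega
    · omega
  rw [sum_congr rfl h1, sum_add_distrib]
  simp

/-- The partial sum `L_1 + … + L_{k-1}`. -/
def vv (L : ℕ → ℕ) (k : ℕ) : ℕ := ∑ a ∈ Ico 1 k, L a

lemma vv_succ (L : ℕ → ℕ) (k : ℕ) (hk : 1 ≤ k) : vv L (k + 1) = vv L k + L k :=
  sum_Ico_succ_top hk _

/-- The factor of colour `k` in the product formula, where `v_k = L_1 + … + L_{k-1}`: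
`b^{J_k,L_k}_{I_k,K_k}` at `t^{J_{k+1} + … + J_n} x` and `-t^M x`, with `w = v_k + L_k`. -/
def Bf (n M : ℕ) (J L I K : ℕ → ℕ) (x : F) (k : ℕ) : F :=
  t ^ ((vv L k : ℤ) * ((K k : ℤ) - J k)) *
    be t (L k) (I k) (K k) (t ^ vv L k * (t ^ (∑ a ∈ Ioc k n, J a) * x)) (-(t ^ M * x))

/-- The product formula for the fused weight. -/
def Wf (n M : ℕ) (J L I K : ℕ → ℕ) (x : F) : F := ∏ k ∈ Icc 1 n, Bf t n M J L I K x k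

/-- The vertex weight `L^{c,i}_{I,K}(x)` at `K = I + e_c - e_i`. -/
def lam (n : ℕ) (I : ℕ → ℕ) (c i : ℕ) (x : F) : F :=
  if i = 0 then 1
  else if c = i then x * t ^ (∑ a ∈ Ioc i n, I a)
  else if c < i then x * (1 - t ^ I i) * t ^ (∑ a ∈ Ioc i n, I a)
  else 0

/-- If the quantities `A`, `D`, `E` attached to the colours satisfy the three-term relation `h`,
the weighted sum over the letter `c` of the product with `A` below `c`, `E` at `c` and `D` above `c`
is a multiple of `∏ A`. By induction on the number `m` of colours: the letters `c ≤ m` share the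
factor `D (m + 1)`, and the letter `m + 1` contributes `E (m + 1) ∏ A`. -/
lemma telescope (J L : ℕ → ℕ) (A D E : ℕ → F) (m : ℕ)
    (h : ∀ k ∈ Icc 1 m,
      (t ^ (vv L k + L k) - t ^ (∑ a ∈ range (k + 1), J a)) * A k =
        (t ^ (vv L k + J k) - t ^ (∑ a ∈ range (k + 1), J a)) * D k +
          (1 - t ^ J k) * E k) :
    ∑ c ∈ range (m + 1), t ^ (∑ a ∈ Ioc c m, J a) * (1 - t ^ J c) *
        ∏ k ∈ Icc 1 m, (if k < c then A k else if k = c then E k else D k) =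
      (t ^ vv L (m + 1) - t ^ (∑ a ∈ range (m + 1), J a)) * ∏ k ∈ Icc 1 m, A k := by
  induction m with
  | zero => simp [vv]
  | succ m ih =>
    have hm := h (m + 1) (by simp)
    have ih' := ih fun k hk => h k (by simp at hk ⊢; omega)
    rw [sum_range_succ, prod_Icc_succ_top (by omega), prod_Icc_succ_top (by omega)]
    have h1 : ∀ c ∈ range (m + 1),
        t ^ (∑ a ∈ Ioc c (m + 1), J a) * (1 - t ^ J c) *
          ∏ k ∈ Icc 1 (m + 1), (if k < c then A k else if k = c then E k else D k) =
        t ^ J (m + 1) * D (m + 1) * (t ^ (∑ a ∈ Ioc c m, J a) * (1 - t ^ J c) *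
          ∏ k ∈ Icc 1 m, (if k < c then A k else if k = c then E k else D k)) := by
      intro c hc
      have hc' := mem_range.1 hc
      rw [prod_Icc_succ_top (by omega), sum_Ioc_succ_top (by omega), pow_add,
        if_neg (by omega : ¬ m + 1 < c), if_neg (by omega : ¬ m + 1 = c)]
      ring
    rw [sum_congr rfl h1, ← mul_sum, ih']
    have h2 : ∏ k ∈ Icc 1 m, (if k < m + 1 then A k else if k = m + 1 then E k else D k) =
        ∏ k ∈ Icc 1 m, A k :=
      prod_congr rfl fun k hk => if_pos (by simp at hk; omega)
    rw [h2, vv_succ L (m + 1) (by omega)]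
    simp only [lt_irrefl, if_false, if_true, Ioc_self, sum_empty, pow_zero, one_mul]
    rw [sum_range_succ _ (m + 1)] at hm ⊢
    rw [pow_add, pow_add] at hm ⊢
    linear_combination (-∏ k ∈ Icc 1 m, A k) * hm

/-- The factor of a colour above the incoming letter, after one vertex whose outgoing letter is
`0` or larger: compared with `Bf`, only the first argument is multiplied by `t`. -/
def Df (n M : ℕ) (J L I K : ℕ → ℕ) (x : F) (k : ℕ) : F :=
  t ^ ((vv L k : ℤ) * ((K k : ℤ) - J k)) *
    be t (L k) (I k) (K k) (t * (t ^ vv L k * (t ^ (∑ a ∈ Ioc k n, J a) * x))) (-(t ^ M * x))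

/-- The factor of the colour of the incoming letter, after one vertex whose outgoing letter is
`0` or larger: `J_k` drops by one and `I_k` grows by one. -/
def Ef (n M : ℕ) (J L I K : ℕ → ℕ) (x : F) (k : ℕ) : F :=
  t ^ ((vv L k : ℤ) * ((K k : ℤ) - J k)) * t ^ vv L k *
    be t (L k) (I k + 1) (K k) (t * (t ^ vv L k * (t ^ (∑ a ∈ Ioc k n, J a) * x)))
      (-(t ^ M * x))

lemma vv_dec_low (L : ℕ → ℕ) (i k : ℕ) (h : k ≤ i ∨ i = 0) : vv (dec L i) k = vv L k := by
  refine sum_congr rfl fun a ha => ?_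
  have := mem_Ico.1 ha
  simp [dec, show a ≠ i by omega]

lemma vv_dec_high (L : ℕ → ℕ) (i k : ℕ) (h : i < k) (hi : 1 ≤ i) (hL : 1 ≤ L i) :
    vv (dec L i) k + 1 = vv L k := by
  have := sum_dec (Ico 1 k) L i hL
  rwa [if_pos (by simp; omega)] at this

lemma Ioc_dec (J : ℕ → ℕ) (c k n : ℕ) (hc : 1 ≤ J c) (h : k < c) (hcn : c ≤ n) :
    ∑ a ∈ Ioc k n, dec J c a + 1 = ∑ a ∈ Ioc k n, J a := by
  have := sum_dec (Ioc k n) J c hc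
  rwa [if_pos (by simp; omega)] at this

lemma Ioc_dec' (J : ℕ → ℕ) (c k n : ℕ) (h : c ≤ k) :
    ∑ a ∈ Ioc k n, dec J c a = ∑ a ∈ Ioc k n, J a := by
  refine sum_congr rfl fun a ha => ?_
  have := mem_Ioc.1 ha
  simp [dec, show a ≠ c by omega]

/-- The factor of a colour `k` smaller than the outgoing letter `i`, or of any colour if `i = 0`,
after the first vertex. For `k < c` the decrease of `J_{k+1} + … + J_n` compensates `x ↦ t x`. -/
lemma Bstep_low (ht : t ≠ 0) (n M : ℕ) (J L I K : ℕ → ℕ) (x : F) (c i k : ℕ) (hc : 1 ≤ J c)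
    (hcn : c ≤ n) (hk : 1 ≤ k) (hi : k < i ∨ i = 0) :
    Bf t n M (dec J c) (dec L i) (stepI I c i) K (t * x) k =
      if k < c then Bf t n (M + 1) J L I K x k
      else if k = c then Ef t n (M + 1) J L I K x k
      else Df t n (M + 1) J L I K x k := by
  have hki : k ≠ i := by omega
  have e1 : dec L i k = L k := by simp [dec, hki]
  have hz : t ^ M * (t * x) = t ^ (M + 1) * x := by ring
  rw [Bf, e1, vv_dec_low L i k (by omega), hz]
  split_ifs with h1 h2
  · have hs := Ioc_dec J c k n hc h1 hcn
    have e2 : dec J c k = J k := by simp [dec, h1.ne]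
    have e3 : stepI I c i k = I k := by simp [stepI, hki, h1.ne]
    rw [Bf, e2, e3, ← hs]
    congr 2; ring
  · subst h2
    have e2 : ((dec J k k : ℕ) : ℤ) = J k - 1 := by simp [dec]; omega
    have e3 : stepI I k i k = I k + 1 := by simp [stepI, hki]
    rw [Ef, e2, e3, Ioc_dec' J k k n le_rfl]
    have e4 : (vv L k : ℤ) * ((K k : ℤ) - (J k - 1)) =
      (vv L k : ℤ) * ((K k : ℤ) - J k) + (vv L k : ℕ) := by ring
    rw [e4, zpow_add₀ ht, zpow_natCast]
    congr 2; ring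
  · have e2 : dec J c k = J k := by simp [dec, h2]
    have e3 : stepI I c i k = I k := by simp [stepI, hki, h2]
    rw [Df, e2, e3, Ioc_dec' J c k n (by omega)]
    congr 2; ring

/-- The factor of the outgoing colour `i` after a first vertex with incoming letter `i`. -/
lemma Bstep_eq (ht : t ≠ 0) (n M : ℕ) (J L I K : ℕ → ℕ) (x : F) (i : ℕ) (hc : 1 ≤ J i) :
    Bf t n M (dec J i) (dec L i) (stepI I i i) K (t * x) i =
      t ^ ((vv L i : ℤ) * ((K i : ℤ) - J i)) * t ^ vv L i *
        be t (L i - 1) (I i) (K i) (t * (t ^ vv L i * (t ^ (∑ a ∈ Ioc i n, J a) * x)))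
          (-(t ^ (M + 1) * x)) := by
  have e1 : dec L i i = L i - 1 := by simp [dec]
  have hz : t ^ M * (t * x) = t ^ (M + 1) * x := by ring
  have e2 : ((dec J i i : ℕ) : ℤ) = J i - 1 := by simp [dec]; omega
  have e3 : stepI I i i i = I i := by simp [stepI]
  rw [Bf, e1, vv_dec_low L i i (by omega), hz, e2, e3, Ioc_dec' J i i n le_rfl]
  have e4 : (vv L i : ℤ) * ((K i : ℤ) - (J i - 1)) =
    (vv L i : ℤ) * ((K i : ℤ) - J i) + (vv L i : ℕ) := by ring
  rw [e4, zpow_add₀ ht, zpow_natCast]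
  congr 2; ring

/-- The factor of the outgoing colour `i` after a first vertex with incoming letter `c < i`. -/
lemma Bstep_lt (n M : ℕ) (J L I K : ℕ → ℕ) (x : F) (c i : ℕ) (hc : c < i) :
    Bf t n M (dec J c) (dec L i) (stepI I c i) K (t * x) i =
      t ^ ((vv L i : ℤ) * ((K i : ℤ) - J i)) *
        be t (L i - 1) (I i - 1) (K i) (t * (t ^ vv L i * (t ^ (∑ a ∈ Ioc i n, J a) * x)))
          (-(t ^ (M + 1) * x)) := by
  have e1 : dec L i i = L i - 1 := by simp [dec]
  have hz : t ^ M * (t * x) = t ^ (M + 1) * x := by ring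
  have e2 : dec J c i = J i := by simp [dec, hc.ne']
  have e3 : stepI I c i i = I i - 1 := by simp [stepI, hc.ne']
  rw [Bf, e1, vv_dec_low L i i (by omega), hz, e2, e3, Ioc_dec' J c i n hc.le]
  congr 2; ring

/-- The factor of a colour above both letters of the first vertex changes by a power of `t` only,
because `J_{k+1} + … + J_n` stays the same and `v_k` drops by one. -/
lemma Bstep_high (ht : t ≠ 0) (n M : ℕ) (J L I K : ℕ → ℕ) (x : F) (c i k : ℕ) (hc : c ≤ i)
    (hi : 1 ≤ i) (hk : i < k) (hL : 1 ≤ L i) :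
    Bf t n M (dec J c) (dec L i) (stepI I c i) K (t * x) k =
      t ^ ((J k : ℤ) - K k) * Bf t n (M + 1) J L I K x k := by
  have e1 : dec L i k = L k := by simp [dec, hk.ne']
  have hz : t ^ M * (t * x) = t ^ (M + 1) * x := by ring
  have e2 : dec J c k = J k := by simp [dec, show k ≠ c by omega]
  have e3 : stepI I c i k = I k := by simp [stepI, hk.ne', show k ≠ c by omega]
  have e4 := vv_dec_high L i k hk hi hL
  rw [Bf, Bf, e1, hz, e2, e3, Ioc_dec' J c k n (by omega), ← e4,
    ← mul_assoc (t ^ ((J k : ℤ) - K k)), ← zpow_add₀ ht]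
  congr 2
  · push_cast; ring
  · ring

lemma range_split (J : ℕ → ℕ) (k n : ℕ) (h : k ≤ n) :
    ∑ a ∈ range (n + 1), J a = ∑ a ∈ range (k + 1), J a + ∑ a ∈ Ioc k n, J a := by
  induction n, h using Nat.le_induction with
  | base => simp
  | succ n hn ih => rw [sum_range_succ, ih, sum_Ioc_succ_top (by omega)]; ring

/-- The hypothesis of `telescope` for the factors of the product formula. -/
lemma Bf_rel (ht : t ≠ 0) (n M : ℕ) (J L I K : ℕ → ℕ) (x : F)
    (hM : ∑ a ∈ range (n + 1), J a = M) (k : ℕ) (hkn : k ≤ n)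
    (hcons : I k + J k = K k + L k) :
    (t ^ (vv L k + L k) - t ^ (∑ a ∈ range (k + 1), J a)) * Bf t n M J L I K x k =
      (t ^ (vv L k + J k) - t ^ (∑ a ∈ range (k + 1), J a)) * Df t n M J L I K x k +
        (1 - t ^ J k) * Ef t n M J L I K x k := by
  have h := be_rel_zero t ht (J k) (L k) (I k) (K k) (by omega)
    (t ^ vv L k * (t ^ (∑ a ∈ Ioc k n, J a) * x)) (-(t ^ M * x)) (t ^ vv L k)
    (t ^ (∑ a ∈ range (k + 1), J a)) (by rw [← hM, range_split J k n hkn]; ring)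
  rw [Bf, Df, Ef, pow_add, pow_add]
  linear_combination t ^ ((vv L k : ℤ) * ((K k : ℤ) - J k)) * h

/-- The product formula satisfies the one-vertex recursion: for every fixed outgoing letter `i` of
the first vertex, averaging over its incoming letter `c` turns `M` into `M + 1`. -/
lemma Wf_step (ht : t ≠ 0) (n M : ℕ) (J L I K : ℕ → ℕ) (x : F) (i : ℕ) (hin : i ≤ n)
    (hJ : ∑ a ∈ range (n + 1), J a = M + 1) (hL : ∑ a ∈ range (n + 1), L a = M + 1)
    (hLi : 1 ≤ L i) (hcons : ∀ a ∈ Icc 1 n, I a + J a = K a + L a) :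
    ∑ c ∈ range (n + 1), t ^ (∑ a ∈ Ioc c n, J a) * (1 - t ^ J c) *
        (lam t n I c i x * Wf t n M (dec J c) (dec L i) (stepI I c i) K (t * x)) =
      t ^ (∑ a ∈ Ioc i n, L a) * (1 - t ^ L i) * Wf t n (M + 1) J L I K x := by
  have hrel : ∀ k ∈ Icc 1 n, _ := fun k hk =>
    Bf_rel t ht n (M + 1) J L I K x hJ k (mem_Icc.1 hk).2 (hcons k hk)
  rcases Nat.eq_zero_or_pos i with rfl | hi
  · have h1 := telescope t J L _ _ _ n hrel
    have h2 : vv L (n + 1) = ∑ a ∈ Ioc 0 n, L a := rfl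
    have h3 := range_split L 0 n (by omega)
    rw [hL, zero_add, sum_range_one] at h3
    have h4 : t ^ (M + 1) = t ^ L 0 * t ^ ∑ a ∈ Ioc 0 n, L a := by rw [h3, pow_add]
    rw [hJ, h4, h2] at h1
    rw [Wf]
    trans ((t ^ ∑ a ∈ Ioc 0 n, L a) - t ^ L 0 * t ^ ∑ a ∈ Ioc 0 n, L a) *
      ∏ k ∈ Icc 1 n, Bf t n (M + 1) J L I K x k
    · rw [← h1]
      refine sum_congr rfl fun c hc => ?_
      rcases Nat.eq_zero_or_pos (J c) with h0 | h0
      · simp [h0]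
      · rw [lam, if_pos rfl, one_mul, Wf]
        congr 1
        refine prod_congr rfl fun k hk => ?_
        exact Bstep_low t ht n M J L I K x c 0 k h0 (by have := mem_range.1 hc; omega)
          (mem_Icc.1 hk).1 (Or.inr rfl)
    · ring
  · obtain ⟨m, rfl⟩ : ∃ m, i = m + 1 := ⟨i - 1, by omega⟩
    -- incoming letters above `i` do not contribute
    rw [← sum_subset (range_subset_range.2 (by omega : m + 1 + 1 ≤ n + 1)) (by
      intro c _ hc
      have hc' : ¬ c < m + 1 + 1 := fun h => hc (mem_range.2 h)
      rw [lam, if_neg (by omega), if_neg (by omega), if_neg (by omega)]; simp)]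
    have hsplit : ∀ f : ℕ → F, ∏ k ∈ Icc 1 n, f k =
        (∏ k ∈ Icc 1 m, f k) * f (m + 1) * ∏ k ∈ Ioc (m + 1) n, f k := by
      intro f
      rw [← prod_Icc_succ_top (by omega)]
      have h1 : Icc 1 n = Ioc 0 n := rfl
      have h2 : Icc 1 (m + 1) = Ioc 0 (m + 1) := rfl
      rw [h1, h2, prod_Ioc_consecutive f (by omega) hin]
    have hsI : ∑ a ∈ Ioc (m + 1) n, I a + ∑ a ∈ Ioc (m + 1) n, J a =
        ∑ a ∈ Ioc (m + 1) n, K a + ∑ a ∈ Ioc (m + 1) n, L a := by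
      rw [← sum_add_distrib, ← sum_add_distrib]
      exact sum_congr rfl fun a ha => hcons a (by simp at ha ⊢; omega)
    set P := ∏ k ∈ Ioc (m + 1) n, Bf t n (M + 1) J L I K x k with hP
    set SI := ∑ a ∈ Ioc (m + 1) n, I a
    set SJ := ∑ a ∈ Ioc (m + 1) n, J a with hSJ
    set SL := ∑ a ∈ Ioc (m + 1) n, L a
    set SK := ∑ a ∈ Ioc (m + 1) n, K a
    have hhigh : ∀ c ≤ m + 1, ∏ k ∈ Ioc (m + 1) n,
        Bf t n M (dec J c) (dec L (m + 1)) (stepI I c (m + 1)) K (t * x) k =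
        t ^ ((SJ : ℤ) - SK) * P := by
      intro c hc
      rw [prod_congr rfl fun k hk => Bstep_high t ht n M J L I K x c (m + 1) k hc (by omega)
        (mem_Ioc.1 hk).1 hLi, prod_mul_distrib]
      congr 1
      have : (SJ : ℤ) - SK = ∑ k ∈ Ioc (m + 1) n, ((J k : ℤ) - K k) := by
        rw [sum_sub_distrib]; push_cast [SJ, SK]; rfl
      rw [this]
      induction (Ioc (m + 1) n) using Finset.induction_on with
      | empty => simp
      | insert a s ha ih => rw [prod_insert ha, sum_insert ha, zpow_add₀ ht, ih]
    -- this power of `t` combines with the one in `lam`, by conservation of the colours above `i`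
    have hscal : t ^ SI * t ^ ((SJ : ℤ) - SK) = t ^ SL := by
      rw [← zpow_natCast, ← zpow_natCast, ← zpow_add₀ ht]
      congr 1; zify at hsI; linarith
    have hlow := telescope t J L _ _ _ m fun k hk =>
      hrel k (by simp at hk ⊢; omega)
    have hpos := be_rel_pos t ht (J (m + 1)) (L (m + 1) - 1) (I (m + 1)) (K (m + 1))
      (by have := hcons (m + 1) (by simp; omega); omega)
      (t ^ vv L (m + 1) * (t ^ SJ * x)) (-(t ^ (M + 1) * x))
    rw [Nat.sub_add_cancel hLi] at hpos
    set PA := ∏ k ∈ Icc 1 m, Bf t n (M + 1) J L I K x k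
    set pre := t ^ ((vv L (m + 1) : ℤ) * ((K (m + 1) : ℤ) - J (m + 1))) with hpre
    set G := be t (L (m + 1) - 1) (I (m + 1) - 1) (K (m + 1))
      (t * (t ^ vv L (m + 1) * (t ^ SJ * x))) (-(t ^ (M + 1) * x)) with hG
    set H := be t (L (m + 1) - 1) (I (m + 1)) (K (m + 1))
      (t * (t ^ vv L (m + 1) * (t ^ SJ * x))) (-(t ^ (M + 1) * x)) with hH
    have hbelow : ∀ c ∈ range (m + 1), t ^ (∑ a ∈ Ioc c n, J a) * (1 - t ^ J c) *
        (lam t n I c (m + 1) x *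
          Wf t n M (dec J c) (dec L (m + 1)) (stepI I c (m + 1)) K (t * x)) =
        (t ^ J (m + 1) * t ^ SJ * x * (1 - t ^ I (m + 1)) * t ^ SL * pre * G * P) *
        (t ^ (∑ a ∈ Ioc c m, J a) * (1 - t ^ J c) *
          ∏ k ∈ Icc 1 m, (if k < c then Bf t n (M + 1) J L I K x k
            else if k = c then Ef t n (M + 1) J L I K x k
            else Df t n (M + 1) J L I K x k)) := by
      intro c hc
      have hc' := mem_range.1 hc
      rcases Nat.eq_zero_or_pos (J c) with h0 | h0
      · simp [h0]
      have e1 : ∑ a ∈ Ioc c n, J a = ∑ a ∈ Ioc c m, J a + J (m + 1) + SJ := by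
        rw [← sum_Ioc_succ_top (by omega), sum_Ioc_consecutive _ (by omega) hin]
      rw [Wf, hsplit, hhigh c (by omega), Bstep_lt t n M J L I K x c (m + 1) (by omega),
        prod_congr rfl fun k hk => Bstep_low t ht n M J L I K x c (m + 1) k h0 (by omega)
          (mem_Icc.1 hk).1 (Or.inl (by have := mem_Icc.1 hk; omega)),
        lam, if_neg (by omega), if_neg (by omega), if_pos (by omega), e1, pow_add, pow_add,
        ← hscal, ← hG, ← hpre]
      ring
    rw [sum_range_succ, sum_congr rfl hbelow, ← mul_sum, hlow]
    have htop : t ^ (∑ a ∈ Ioc (m + 1) n, J a) * (1 - t ^ J (m + 1)) *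
        (lam t n I (m + 1) (m + 1) x *
          Wf t n M (dec J (m + 1)) (dec L (m + 1)) (stepI I (m + 1) (m + 1)) K (t * x)) =
        t ^ SJ * x * (1 - t ^ J (m + 1)) * t ^ SL * pre * t ^ vv L (m + 1) * H * P * PA := by
      rcases Nat.eq_zero_or_pos (J (m + 1)) with h0 | h0
      · simp [h0]
      have e2 : ∏ k ∈ Icc 1 m, Bf t n M (dec J (m + 1)) (dec L (m + 1))
          (stepI I (m + 1) (m + 1)) K (t * x) k = PA := by
        refine prod_congr rfl fun k hk => ?_
        have := mem_Icc.1 hk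
        rw [Bstep_low t ht n M J L I K x (m + 1) (m + 1) k h0 (by omega)
          (mem_Icc.1 hk).1 (Or.inl (by omega)), if_pos (by omega)]
      rw [Wf, hsplit, hhigh (m + 1) le_rfl, Bstep_eq t ht n M J L I K x (m + 1) h0, e2,
        lam, if_neg (by omega), if_pos rfl, ← hscal, ← hH, ← hpre, ← hSJ]
      ring
    rw [htop, Wf, hsplit, ← hP]
    have e3 : t ^ (M + 1) = t ^ (∑ a ∈ range (m + 1), J a) * t ^ J (m + 1) * t ^ SJ := by
      rw [← hJ, range_split J (m + 1) n hin, sum_range_succ, pow_add, pow_add]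
    have e4 : Bf t n (M + 1) J L I K x (m + 1) = pre * be t (L (m + 1)) (I (m + 1)) (K (m + 1))
      (t ^ vv L (m + 1) * (t ^ SJ * x)) (-(t ^ (M + 1) * x)) := rfl
    rw [e4]
    rw [show (-(t ^ (M + 1) * x)) = -(t ^ (∑ a ∈ range (m + 1), J a) * t ^ J (m + 1) * t ^ SJ * x)
      by rw [e3]] at *
    linear_combination (-(t ^ SL * pre * P * PA)) * hpos

end Step

/-! ### Words, contents and inversions -/

section Words

/-- Words of length `M` in the letters `0, …, n`, letter `a` occurring `J a` times
(including `a = 0`). -/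
def wrdF (n M : ℕ) (J : ℕ → ℕ) : Finset (Fin M → ℕ) :=
  (Fintype.piFinset fun _ : Fin M => range (n + 1)).filter fun w =>
    ∀ a ∈ range (n + 1), (univ.filter fun s => w s = a).card = J a

/-- `Finset.mem_filter` for an arbitrary decidability instance. -/
lemma mem_filt {α : Type*} {p : α → Prop} {h : DecidablePred p} {s : Finset α} {a : α} :
    a ∈ @Finset.filter α p h s ↔ a ∈ s ∧ p a := Finset.mem_filter

lemma mem_wrdF (n M : ℕ) (J : ℕ → ℕ) (w : Fin M → ℕ) :
    w ∈ wrdF n M J ↔ (∀ s, w s ∈ range (n + 1)) ∧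
      ∀ a ∈ range (n + 1), (univ.filter fun s => w s = a).card = J a := by
  rw [wrdF, mem_filt, Fintype.mem_piFinset]

lemma mem_wrd (n M : ℕ) (J : ℕ → ℕ) (w : Fin M → ℕ) :
    w ∈ wrd n M J ↔ (∀ s, w s ∈ range (n + 1)) ∧
      ∀ a ∈ Icc 1 n, (univ.filter fun s => w s = a).card = J a := by
  rw [wrd, mem_filt, Fintype.mem_piFinset]

lemma card_cons (M : ℕ) (c : ℕ) (w : Fin M → ℕ) (a : ℕ) :
    (univ.filter fun s => (Fin.cons c w : Fin (M + 1) → ℕ) s = a).card =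
      (if c = a then 1 else 0) + (univ.filter fun s => w s = a).card := by
  rw [card_filter, card_filter, Fin.sum_univ_succ]
  simp only [Fin.cons_zero, Fin.cons_succ]

lemma cons_mem_wrdF (n M : ℕ) (J : ℕ → ℕ) (c : ℕ) (w : Fin M → ℕ) :
    (Fin.cons c w : Fin (M + 1) → ℕ) ∈ wrdF n (M + 1) J ↔
      c ∈ range (n + 1) ∧ 1 ≤ J c ∧ w ∈ wrdF n M (dec J c) := by
  simp only [mem_wrdF, Fin.forall_fin_succ, Fin.cons_zero, Fin.cons_succ]
  simp only [card_cons M c w]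
  constructor
  · rintro ⟨⟨h1, h2⟩, h3⟩
    refine ⟨h1, ?_, h2, fun a ha => ?_⟩
    · have := h3 c h1; rw [if_pos rfl] at this; omega
    · have := h3 a ha
      unfold dec
      split_ifs at this ⊢ <;> omega
  · rintro ⟨h1, h2, h3, h4⟩
    refine ⟨⟨h1, h3⟩, fun a ha => ?_⟩
    have := h4 a ha
    unfold dec at this
    by_cases hac : a = c
    · subst hac; simp at this ⊢; omega
    · rw [if_neg hac] at this; rw [if_neg (Ne.symm hac)]; omega

lemma sum_wrdF_succ {R : Type*} [AddCommMonoid R] (n M : ℕ) (J : ℕ → ℕ)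
    (f : (Fin (M + 1) → ℕ) → R) :
    ∑ j ∈ wrdF n (M + 1) J, f j =
      ∑ c ∈ range (n + 1), if 1 ≤ J c then
        ∑ w ∈ wrdF n M (dec J c), f (Fin.cons c w) else 0 := by
  rw [← sum_fiberwise_of_maps_to (s := wrdF n (M + 1) J) (t := range (n + 1)) (g := fun j => j 0)]
  · refine sum_congr rfl fun c hc => ?_
    split_ifs with h
    · symm
      refine sum_bij' (fun w _ => (Fin.cons c w : Fin (M + 1) → ℕ)) (fun j _ => Fin.tail j)
        ?_ ?_ ?_ ?_ ?_
      · intro w hw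
        exact mem_filter.2 ⟨(cons_mem_wrdF n M J c w).2 ⟨hc, h, hw⟩, rfl⟩
      · intro j hj
        obtain ⟨h1, h2⟩ := mem_filter.1 hj
        rw [← Fin.cons_self_tail j, cons_mem_wrdF] at h1
        rw [← h2]; exact h1.2.2
      · intro w _; exact Fin.tail_cons _ _
      · intro j hj
        obtain ⟨h1, h2⟩ := mem_filter.1 hj
        rw [← h2]; exact Fin.cons_self_tail j
      · intro w _; rfl
    · refine sum_eq_zero fun j hj => ?_
      obtain ⟨h1, h2⟩ := mem_filter.1 hj
      rw [← Fin.cons_self_tail j, cons_mem_wrdF, h2] at h1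
      exact absurd h1.2.1 h
  · intro j hj
    exact ((mem_wrdF n _ J j).1 hj).1 0

lemma wrdF_sum (n M : ℕ) (J : ℕ → ℕ) (w : Fin M → ℕ) (hw : w ∈ wrdF n M J) :
    ∑ a ∈ range (n + 1), J a = M := by
  obtain ⟨h1, h2⟩ := (mem_wrdF n M J w).1 hw
  rw [← sum_congr rfl h2, ← card_eq_sum_card_fiberwise]
  · simp
  · intro s _; exact h1 s

lemma wrdF_lt (n M : ℕ) (J : ℕ → ℕ) (w : Fin M → ℕ) (hw : w ∈ wrdF n M J) (c : ℕ)
    (hc : c ≤ n) :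
    (univ.filter fun s => w s < c).card = ∑ a ∈ range c, J a := by
  obtain ⟨h1, h2⟩ := (mem_wrdF n M J w).1 hw
  rw [card_eq_sum_card_fiberwise (f := w) (t := range c)]
  · refine sum_congr rfl fun a ha => ?_
    have ha' := mem_range.1 ha
    rw [← h2 a (mem_range.2 (by omega)), filter_filter]
    congr 1
    ext s
    simp only [mem_filt, mem_univ, true_and]
    omega
  · intro s hs
    simpa using hs

lemma invNum_wrev (M : ℕ) (w : Fin M → ℕ) :
    invNum M (wrev M w) =
      (univ.filter fun p : Fin M × Fin M => p.1 < p.2 ∧ w p.2 < w p.1).card := by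
  refine card_bij' (fun p _ => (p.2.rev, p.1.rev)) (fun p _ => (p.2.rev, p.1.rev)) ?_ ?_ ?_ ?_
  · intro p hp
    have := mem_filt.1 hp
    exact mem_filt.2 (by simpa [wrev] using this)
  · intro p hp
    have := mem_filt.1 hp
    exact mem_filt.2 (by simpa [wrev] using this)
  · intro p _; simp
  · intro p _; simp

/-- The first letter of `w` is the last one of `rev(w)`, so it forms an inversion with each smaller
letter. -/
lemma invNum_cons (M : ℕ) (c : ℕ) (w : Fin M → ℕ) :
    invNum (M + 1) (wrev (M + 1) (Fin.cons c w)) =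
      (univ.filter fun s => w s < c).card + invNum M (wrev M w) := by
  rw [invNum_wrev, invNum_wrev]
  simp only [card_filter, Fintype.sum_prod_type, Fin.sum_univ_succ, Fin.cons_zero,
    Fin.cons_succ, false_and, if_false, zero_add, Fin.succ_pos, true_and,
    Fin.not_lt_zero, Fin.succ_lt_succ_iff]

/-- A content of the letters `1, …, n` determines the number of letters `0`. -/
lemma wrd_eq (n M : ℕ) (J : ℕ → ℕ) (hJ : ∑ a ∈ Icc 1 n, J a ≤ M) :
    wrd n M J = wrdF n M (Function.update J 0 (M - ∑ a ∈ Icc 1 n, J a)) := by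
  ext w
  rw [mem_wrd, mem_wrdF]
  refine and_congr_right fun h1 => ⟨fun h a ha => ?_, fun h a ha => ?_⟩
  · by_cases h0 : a = 0
    · subst h0
      have h2 : ∑ b ∈ range (n + 1), (univ.filter fun s => w s = b).card = M := by
        rw [← card_eq_sum_card_fiberwise]
        · simp
        · intro s _; exact h1 s
      rw [range_split _ 0 n (by omega), zero_add, sum_range_one] at h2
      have h3 : ∑ b ∈ Ioc 0 n, (univ.filter fun s => w s = b).card = ∑ a ∈ Icc 1 n, J a :=
        sum_congr rfl h
      rw [Function.update_self]; omega
    · rw [Function.update_of_ne h0]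
      exact h a (by simp at ha ⊢; omega)
  · have := h a (by simp at ha ⊢; omega)
    rwa [Function.update_of_ne (by simp at ha; omega)] at this

lemma update_sum (n M : ℕ) (J : ℕ → ℕ) (hJ : ∑ a ∈ Icc 1 n, J a ≤ M) :
    ∑ a ∈ range (n + 1), Function.update J 0 (M - ∑ a ∈ Icc 1 n, J a) a = M := by
  rw [range_split _ 0 n (by omega), zero_add, sum_range_one, Function.update_self]
  have h3 : ∑ b ∈ Ioc 0 n, Function.update J 0 (M - ∑ a ∈ Icc 1 n, J a) b =
      ∑ a ∈ Icc 1 n, J a :=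
    sum_congr rfl fun a ha => Function.update_of_ne (by simp at ha; omega) _ _
  omega

lemma dec_sum (n M : ℕ) (J : ℕ → ℕ) (c : ℕ) (hc : c ∈ range (n + 1)) (hJc : 1 ≤ J c)
    (hJ : ∑ a ∈ range (n + 1), J a = M + 1) : ∑ a ∈ range (n + 1), dec J c a = M := by
  have := sum_dec (range (n + 1)) J c hJc
  rw [if_pos hc] at this; omega

end Words

/-! ### Splitting off the first vertex of a column -/

section Vertex

variable {F : Type*} [Field F] (t : F)

/-- The powers of `t`, in the form expected by `Lw` and `Pprod`. -/
def tp (m : ℤ) : F := t ^ m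

lemma Istep_zero (M : ℕ) (I : ℕ → ℕ) (j l : Fin M → ℕ) (a : ℕ) : Istep M I j l 0 a = I a := by
  simp [Istep]

lemma Istep_cons (M : ℕ) (I I' : ℕ → ℕ) (c i : ℕ) (w l : Fin M → ℕ) (s a : ℕ)
    (h : (I' a : ℤ) = I a + (if a = c then 1 else 0) - (if a = i then 1 else 0)) :
    Istep (M + 1) I (Fin.cons c w) (Fin.cons i l) (s + 1) a = Istep M I' w l s a := by
  simp only [Istep, Fin.sum_univ_succ, Fin.cons_zero, Fin.cons_succ, Fin.val_zero, Fin.val_succ,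
    add_lt_add_iff_right, Nat.succ_pos, if_true, h]
  ring

lemma Lw_congr (n : ℕ) (Ib It Ib' It' : ℕ → ℤ) (j i : ℕ) (x : F)
    (h1 : ∀ a ∈ Icc 1 n, Ib a = Ib' a) (h2 : ∀ a ∈ Icc 1 n, It a = It' a) (hi : i ≤ n) :
    Lw (tp t) n Ib It j i x = Lw (tp t) n Ib' It' j i x := by
  have e1 : (∀ a ∈ Icc 1 n, Ib a + (if a = j then (1 : ℤ) else 0) =
      It a + (if a = i then 1 else 0)) ↔
      (∀ a ∈ Icc 1 n, Ib' a + (if a = j then (1 : ℤ) else 0) =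
      It' a + (if a = i then 1 else 0)) :=
    forall₂_congr fun a ha => by rw [h1 a ha, h2 a ha]
  have e2 : ∑ a ∈ Icc (i + 1) n, Ib a = ∑ a ∈ Icc (i + 1) n, Ib' a :=
    sum_congr rfl fun a ha => h1 a (by simp at ha ⊢; omega)
  by_cases H : ∀ a ∈ Icc 1 n, Ib' a + (if a = j then (1 : ℤ) else 0) =
      It' a + (if a = i then 1 else 0)
  · rw [Lw, Lw, if_pos (e1.2 H), if_pos H]
    by_cases h0 : i = 0
    · rw [if_pos h0, if_pos h0]
    · rw [e2, h1 i (by simp; omega)]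
  · rw [Lw, Lw, if_neg (fun h => H (e1.1 h)), if_neg H]

/-- The weight of a column is the weight of its first vertex times that of the rest, whose spectral
parameter is `t x`. -/
lemma Pprod_cons (n M : ℕ) (I K : ℕ → ℕ) (c i : ℕ) (w l : Fin M → ℕ) (x : F)
    (ht : t ≠ 0) (hi : i ≤ n) (hl : ∀ s, l s ≤ n) :
    Pprod (tp t) n (M + 1) (Fin.cons c w) (Fin.cons i l) I K x =
      lam t n I c i x * Pprod (tp t) n M w l (stepI I c i) K (t * x) := by
  by_cases hbad : i ≠ 0 ∧ i ≠ c ∧ I i = 0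
  · -- an absent colour cannot leave the vertex
    obtain ⟨h0, h1, h2⟩ := hbad
    have hlam : lam t n I c i x = 0 := by
      rw [lam, if_neg h0, if_neg (Ne.symm h1), h2]; simp
    rw [hlam, zero_mul, Pprod, if_neg]
    rintro ⟨h, -⟩
    have := h 1 (by simp) i (by simp; omega)
    simp [Istep, h1, h2] at this
  · have hstep : ∀ a ∈ Icc 1 n, ((stepI I c i a : ℕ) : ℤ) =
        I a + (if a = c then 1 else 0) - (if a = i then 1 else 0) := by
      intro a ha
      have ha' := mem_Icc.1 ha
      unfold stepI
      by_cases hai : a = i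
      · subst hai
        by_cases hac : a = c
        · simp [hac]
        · have : I a ≠ 0 := fun h => hbad ⟨by omega, hac, h⟩
          simp [hac]; omega
      · simp [hai]
    have hI : ∀ s, ∀ a ∈ Icc 1 n,
        Istep (M + 1) I (Fin.cons c w) (Fin.cons i l) (s + 1) a =
          Istep M (stepI I c i) w l s a := fun s a ha =>
      Istep_cons M I _ c i w l s a (hstep a ha)
    have hcond : ((∀ s ∈ range (M + 1 + 1), ∀ a ∈ Icc 1 n,
          0 ≤ Istep (M + 1) I (Fin.cons c w) (Fin.cons i l) s a) ∧
        (∀ a ∈ Icc 1 n,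
          Istep (M + 1) I (Fin.cons c w) (Fin.cons i l) (M + 1) a = (K a : ℤ))) ↔
        ((∀ s ∈ range (M + 1), ∀ a ∈ Icc 1 n, 0 ≤ Istep M (stepI I c i) w l s a) ∧
        (∀ a ∈ Icc 1 n, Istep M (stepI I c i) w l M a = (K a : ℤ))) := by
      refine and_congr ⟨fun h s hs a ha => ?_, fun h s hs a ha => ?_⟩
        (forall₂_congr fun a ha => by rw [hI M a ha])
      · rw [← hI s a ha]; exact h (s + 1) (by simp at hs ⊢; omega) a ha
      · cases s with
        | zero => rw [Istep_zero]; positivity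
        | succ s => rw [hI s a ha]; exact h s (by simp at hs ⊢; omega) a ha
    rw [Pprod, Pprod]
    by_cases hc : ((∀ s ∈ range (M + 1), ∀ a ∈ Icc 1 n, 0 ≤ Istep M (stepI I c i) w l s a) ∧
        (∀ a ∈ Icc 1 n, Istep M (stepI I c i) w l M a = (K a : ℤ)))
    · rw [if_pos hc, if_pos (hcond.2 hc), Fin.prod_univ_succ]
      congr 1
      · simp only [Fin.cons_zero, Fin.val_zero]
        rw [Lw_congr t n _ _ (fun a => (I a : ℤ)) (fun a => (stepI I c i a : ℤ)) c i _
          (fun a _ => Istep_zero _ _ _ _ a) (fun a ha => by rw [hI 0 a ha, Istep_zero]) hi]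
        rw [Lw, if_pos (fun a ha => by rw [hstep a ha]; ring)]
        have e : ∑ a ∈ Icc (i + 1) n, (I a : ℤ) = ((∑ a ∈ Ioc i n, I a : ℕ) : ℤ) := by
          push_cast; exact sum_congr (by ext; simp) fun _ _ => rfl
        simp only [lam, tp, e, zpow_natCast, Nat.cast_zero, zpow_zero, one_mul]
      · refine prod_congr rfl fun s _ => ?_
        simp only [Fin.cons_succ, Fin.val_succ]
        rw [Lw_congr t n _ _ _ _ _ _ _ (fun a ha => hI s a ha) (fun a ha => hI (s + 1) a ha)
          (hl s)]
        congr 1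
        simp only [tp, Nat.cast_succ, zpow_add₀ ht, zpow_one]; ring
    · rw [if_neg hc, if_neg (fun h => hc (hcond.1 h)), mul_zero]

end Vertex

/-! ### Exchangeability -/

section Exchange

variable {F : Type*} [Field F] (t : F)

/-- The `t⁻¹`-factorial `∏_{k=1}^m (1 - t^{-k})`. -/
def qf (m : ℕ) : F := ∏ k ∈ range m, (1 - t⁻¹ ^ (k + 1))

/-- The product of the `t⁻¹`-factorials of the letter multiplicities. -/
def qfJ (n : ℕ) (J : ℕ → ℕ) : F := ∏ a ∈ range (n + 1), qf t (J a)

lemma qfJ_dec (n : ℕ) (J : ℕ → ℕ) (c : ℕ) (hc : c ∈ range (n + 1)) (hJ : 1 ≤ J c) :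
    qfJ t n J = (1 - t⁻¹ ^ J c) * qfJ t n (dec J c) := by
  rw [qfJ, qfJ, ← mul_prod_erase _ _ hc, ← mul_prod_erase _ (fun a => qf t (dec J c a)) hc]
  have h1 : ∀ a ∈ (range (n + 1)).erase c, qf t (J a) = qf t (dec J c a) := fun a ha => by
    simp [dec, (mem_erase.1 ha).1]
  rw [prod_congr rfl h1]
  obtain ⟨m, hm⟩ : ∃ m, J c = m + 1 := ⟨J c - 1, by omega⟩
  have h2 : dec J c c = m := by simp [dec, hm]
  simp only [h2, hm, qf, prod_range_succ _ m]
  ring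

/-- `C_M(J)` for words with prescribed multiplicities of all letters. -/
def CF (n M : ℕ) (J : ℕ → ℕ) : F := ∑ j ∈ wrdF n M J, t ^ (-(invNum M (wrev M j) : ℤ))

/-- The partial sum over the incoming words only, for a fixed outgoing word `l`. -/
def XF (n M : ℕ) (J : ℕ → ℕ) (l : Fin M → ℕ) (I K : ℕ → ℕ) (x : F) : F :=
  ∑ j ∈ wrdF n M J, t ^ (-(invNum M (wrev M j) : ℤ)) * Pprod (tp t) n M j l I K x

lemma inv_cons_pow (ht : t ≠ 0) (n M : ℕ) (J : ℕ → ℕ) (c : ℕ) (w : Fin M → ℕ)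
    (hc : c ∈ range (n + 1)) (hw : w ∈ wrdF n M (dec J c)) :
    t ^ (-(invNum (M + 1) (wrev (M + 1) (Fin.cons c w)) : ℤ)) =
      (t ^ ∑ a ∈ range c, J a)⁻¹ * t ^ (-(invNum M (wrev M w) : ℤ)) := by
  have h1 : ∑ a ∈ range c, dec J c a = ∑ a ∈ range c, J a :=
    sum_congr rfl fun a ha => by simp [dec, (mem_range.1 ha).ne]
  rw [invNum_cons, wrdF_lt n M _ w hw c (by simpa [Nat.lt_succ_iff] using hc), h1, Nat.cast_add,
    neg_add, zpow_add₀ ht, zpow_neg, zpow_natCast]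

lemma wrdF_zero (n : ℕ) (J : ℕ → ℕ) (hJ : ∑ a ∈ range (n + 1), J a = 0) (w : Fin 0 → ℕ) :
    wrdF n 0 J = {w} := by
  ext v
  rw [mem_wrdF, mem_singleton]
  refine ⟨fun _ => Subsingleton.elim _ _, fun _ => ⟨fun s => s.elim0, fun a ha => ?_⟩⟩
  rw [sum_eq_zero_iff.1 hJ a ha]
  simp

lemma qfJ_zero (n : ℕ) (J : ℕ → ℕ) (hJ : ∑ a ∈ range (n + 1), J a = 0) : qfJ t n J = 1 :=
  prod_eq_one fun a ha => by rw [sum_eq_zero_iff.1 hJ a ha]; simp [qf]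

/-- `C_M(J)` is a `t⁻¹`-multinomial coefficient. -/
lemma CF_mul (ht : t ≠ 0) (n M : ℕ) (J : ℕ → ℕ) (hJ : ∑ a ∈ range (n + 1), J a = M) :
    CF t n M J * qfJ t n J = qf t M := by
  induction M generalizing J with
  | zero =>
    rw [qfJ_zero t n J hJ, CF, wrdF_zero n J hJ Fin.elim0]
    simp [invNum, qf]
  | succ M ih =>
    have h1 : ∀ c ∈ range (n + 1),
        (if 1 ≤ J c then ∑ w ∈ wrdF n M (dec J c),
          t ^ (-(invNum (M + 1) (wrev (M + 1) (Fin.cons c w)) : ℤ)) else 0) * qfJ t n J =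
        ((t⁻¹) ^ (∑ a ∈ range c, J a) - (t⁻¹) ^ (∑ a ∈ range (c + 1), J a)) * qf t M := by
      intro c hc
      split_ifs with h
      · rw [sum_congr rfl fun w hw => inv_cons_pow t ht n M J c w hc hw, ← mul_sum,
          qfJ_dec t n J c hc h, ← ih (dec J c) (dec_sum n M J c hc h hJ), CF, sum_range_succ,
          pow_add, inv_pow]
        ring
      · rw [sum_range_succ, show J c = 0 by omega]; simp
    rw [CF, sum_wrdF_succ, sum_mul, sum_congr rfl h1, ← sum_mul,
      sum_range_sub' (fun c => (t⁻¹) ^ (∑ a ∈ range c, J a)), hJ]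
    rw [qf, qf, prod_range_succ]
    simp [mul_comm]

/-- Up to the common factor `-t^N`, the weights used in `telescope` are those with which `t^{-𝓘}`
charges the letter `c` in first position. -/
lemma weight_eq (ht : t ≠ 0) (n N : ℕ) (J : ℕ → ℕ) (hJ : ∑ a ∈ range (n + 1), J a = N) (c : ℕ)
    (hc : c ≤ n) :
    t ^ (∑ a ∈ Ioc c n, J a) * (1 - t ^ J c) =
      -t ^ N * ((t ^ ∑ a ∈ range c, J a)⁻¹ * (1 - t⁻¹ ^ J c)) := by
  rw [← hJ, range_split J c n hc, sum_range_succ, pow_add, pow_add, inv_pow]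
  field_simp
  ring

/-- `Wf_step`, with the weights rewritten by `weight_eq`. -/
lemma Wf_step' (ht : t ≠ 0) (n M : ℕ) (J L I K : ℕ → ℕ) (x : F) (i : ℕ) (hin : i ≤ n)
    (hJ : ∑ a ∈ range (n + 1), J a = M + 1) (hL : ∑ a ∈ range (n + 1), L a = M + 1)
    (hLi : 1 ≤ L i) (hcons : ∀ a ∈ Icc 1 n, I a + J a = K a + L a) :
    ∑ c ∈ range (n + 1), (t ^ ∑ a ∈ range c, J a)⁻¹ * (1 - t⁻¹ ^ J c) *
        (lam t n I c i x * Wf t n M (dec J c) (dec L i) (stepI I c i) K (t * x)) =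
      (t ^ ∑ a ∈ range i, L a)⁻¹ * (1 - t⁻¹ ^ L i) * Wf t n (M + 1) J L I K x := by
  have h := Wf_step t ht n M J L I K x i hin hJ hL hLi hcons
  rw [weight_eq t ht n _ L hL i hin, sum_congr rfl fun c hc => by
    rw [weight_eq t ht n _ J hJ c (by simpa [Nat.lt_succ_iff] using hc), mul_assoc],
    ← mul_sum, mul_assoc] at h
  exact mul_left_cancel₀ (neg_ne_zero.2 (pow_ne_zero _ ht)) h

/-- `t`-exchangeability together with the product formula: the sum over incoming words depends
on the outgoing word `l` only through its content and the factor `t^{-𝓘(rev l)}`. -/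
lemma exchange (ht : t ≠ 0) (n M : ℕ) (J L I K : ℕ → ℕ) (x : F) (l : Fin M → ℕ)
    (hl : l ∈ wrdF n M L) (hJ : ∑ a ∈ range (n + 1), J a = M)
    (hcons : ∀ a ∈ Icc 1 n, I a + J a = K a + L a) :
    XF t n M J l I K x * t ^ (invNum M (wrev M l)) * qfJ t n J =
      Wf t n M J L I K x * qfJ t n L := by
  induction M generalizing J L I x with
  | zero =>
    have hL := wrdF_sum n 0 L l hl
    have hJ0 := sum_eq_zero_iff.1 hJ
    have hL0 := sum_eq_zero_iff.1 hL
    have hW : Wf t n 0 J L I K x = 1 := prod_eq_one fun k hk => by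
      have h1 : L k = 0 := hL0 k (by simp at hk ⊢; omega)
      have h2 : vv L k = 0 := sum_eq_zero fun a ha => hL0 a (by simp at hk ha ⊢; omega)
      simp [Bf, h1, h2, be, ec, gv_zero_right]
    have hP : Pprod (tp t) n 0 l l I K x = 1 := by
      rw [Pprod, if_pos]
      · simp
      · refine ⟨fun s _ a _ => by simp [Istep], fun a ha => ?_⟩
        have h1 := hcons a ha
        rw [hJ0 a (by simp at ha ⊢; omega), hL0 a (by simp at ha ⊢; omega)] at h1
        simp [Istep]; omega
    rw [qfJ_zero t n J hJ, qfJ_zero t n L hL, hW, XF, wrdF_zero n J hJ l, sum_singleton, hP]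
    simp [invNum]
  | succ M ih =>
    have hL := wrdF_sum n (M + 1) L l hl
    obtain ⟨i, l', rfl⟩ : ∃ i l', l = Fin.cons i l' := ⟨l 0, Fin.tail l, (Fin.cons_self_tail l).symm⟩
    obtain ⟨hi, hLi, hl'⟩ := (cons_mem_wrdF n M L i l').1 hl
    have hin : i ≤ n := by simpa [Nat.lt_succ_iff] using hi
    have hl'n : ∀ s, l' s ≤ n := fun s => by
      simpa [Nat.lt_succ_iff] using ((mem_wrdF n M _ l').1 hl').1 s
    have hinv : invNum (M + 1) (wrev (M + 1) (Fin.cons i l')) =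
        ∑ a ∈ range i, L a + invNum M (wrev M l') := by
      rw [invNum_cons, wrdF_lt n M _ l' hl' i hin]
      congr 1
      exact sum_congr rfl fun a ha => by simp [dec, (mem_range.1 ha).ne]
    have h1 : ∀ c ∈ range (n + 1),
        (if 1 ≤ J c then ∑ w ∈ wrdF n M (dec J c),
          t ^ (-(invNum (M + 1) (wrev (M + 1) (Fin.cons c w)) : ℤ)) *
            Pprod (tp t) n (M + 1) (Fin.cons c w) (Fin.cons i l') I K x else 0) *
          (t ^ invNum M (wrev M l') * qfJ t n J) =
        (t ^ ∑ a ∈ range c, J a)⁻¹ * (1 - t⁻¹ ^ J c) *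
          (lam t n I c i x * Wf t n M (dec J c) (dec L i) (stepI I c i) K (t * x)) *
          qfJ t n (dec L i) := by
      intro c hc
      split_ifs with h
      · have h2 : ∀ w ∈ wrdF n M (dec J c),
            t ^ (-(invNum (M + 1) (wrev (M + 1) (Fin.cons c w)) : ℤ)) *
              Pprod (tp t) n (M + 1) (Fin.cons c w) (Fin.cons i l') I K x =
            (t ^ ∑ a ∈ range c, J a)⁻¹ * lam t n I c i x *
              (t ^ (-(invNum M (wrev M w) : ℤ)) *
                Pprod (tp t) n M w l' (stepI I c i) K (t * x)) := by
          intro w hw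
          rw [inv_cons_pow t ht n M J c w hc hw, Pprod_cons t n M I K c i w l' x ht hin hl'n]
          ring
        rw [sum_congr rfl h2, ← mul_sum]
        by_cases hbad : i ≠ 0 ∧ i ≠ c ∧ I i = 0
        · obtain ⟨g0, g1, g2⟩ := hbad
          have hlam : lam t n I c i x = 0 := by
            rw [lam, if_neg g0, if_neg (Ne.symm g1), g2]; simp
          simp [hlam]
        · have h3 := ih (dec J c) (dec L i) (stepI I c i) (t * x) l' hl'
            (dec_sum n M J c hc h hJ) (by
              intro a ha
              have ha' := mem_Icc.1 ha
              have := hcons a ha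
              unfold stepI dec
              by_cases hai : a = i
              · subst hai
                by_cases hac : a = c
                · subst hac; simp; omega
                · have : I a ≠ 0 := fun h => hbad ⟨by omega, hac, h⟩
                  simp [hac]; omega
              · by_cases hac : a = c
                · subst hac; simp [hai]; omega
                · simp [hai, hac]; omega)
          rw [XF] at h3
          rw [qfJ_dec t n J c hc h]
          linear_combination (t ^ ∑ a ∈ range c, J a)⁻¹ * lam t n I c i x * (1 - t⁻¹ ^ J c) * h3
      · rw [show J c = 0 by omega]; simp
    have hstep := Wf_step' t ht n M J L I K x i hin hJ hL hLi hcons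
    rw [XF, sum_wrdF_succ, hinv, pow_add]
    have h2 := sum_congr rfl h1
    rw [← sum_mul, ← sum_mul, hstep] at h2
    rw [qfJ_dec t n L i hi hLi]
    have h3 : t ^ (∑ a ∈ range i, L a) * (t ^ (∑ a ∈ range i, L a))⁻¹ = 1 :=
      mul_inv_cancel₀ (pow_ne_zero _ ht)
    linear_combination t ^ (∑ a ∈ range i, L a) * h2 +
      (1 - t⁻¹ ^ L i) * Wf t n (M + 1) J L I K x * qfJ t n (dec L i) * h3

lemma qf_ne_zero (h1 : ∀ m : ℕ, m ≠ 0 → t ^ m ≠ 1) (m : ℕ) : qf t m ≠ 0 := by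
  refine prod_ne_zero_iff.2 fun k _ h => h1 (k + 1) (by omega) ?_
  rw [inv_pow, sub_eq_zero] at h
  exact inv_eq_one.1 h.symm

lemma qfJ_ne_zero (h1 : ∀ m : ℕ, m ≠ 0 → t ^ m ≠ 1) (n : ℕ) (J : ℕ → ℕ) : qfJ t n J ≠ 0 :=
  prod_ne_zero_iff.2 fun _ _ => qf_ne_zero t h1 _

lemma CF_ne_zero (ht : t ≠ 0) (h1 : ∀ m : ℕ, m ≠ 0 → t ^ m ≠ 1) (n M : ℕ) (J : ℕ → ℕ)
    (hJ : ∑ a ∈ range (n + 1), J a = M) : CF t n M J ≠ 0 := fun h => by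
  have := CF_mul t ht n M J hJ
  rw [h, zero_mul] at this
  exact qf_ne_zero t h1 M this.symm

/-- Summing `exchange` over the outgoing words. -/
lemma sum_XF (ht : t ≠ 0) (h1 : ∀ m : ℕ, m ≠ 0 → t ^ m ≠ 1) (n M : ℕ) (J L I K : ℕ → ℕ) (x : F)
    (hJ : ∑ a ∈ range (n + 1), J a = M) (hL : ∑ a ∈ range (n + 1), L a = M)
    (hcons : ∀ a ∈ Icc 1 n, I a + J a = K a + L a) :
    ∑ l ∈ wrdF n M L, XF t n M J l I K x = CF t n M J * Wf t n M J L I K x := by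
  apply mul_right_cancel₀ (qfJ_ne_zero t h1 n J)
  have h2 : ∀ l ∈ wrdF n M L, XF t n M J l I K x * qfJ t n J =
      t ^ (-(invNum M (wrev M l) : ℤ)) * (Wf t n M J L I K x * qfJ t n L) := by
    intro l hl
    have h3 := exchange t ht n M J L I K x l hl hJ hcons
    rw [← h3, zpow_neg, zpow_natCast]
    field_simp
  rw [sum_mul, sum_congr rfl h2, ← sum_mul]
  have h4 := CF_mul t ht n M J hJ
  have h5 := CF_mul t ht n M L hL
  rw [CF] at h5
  linear_combination Wf t n M J L I K x * (h5 - h4)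

end Exchange

/-! ### Passage to `ℚ(t)[x]` -/

section Transfer

lemma map_Lw {R S : Type*} [CommRing R] [CommRing S] (f : R →+* S) (tpow : ℤ → R) (n : ℕ)
    (Ib It : ℕ → ℤ) (j i : ℕ) (x : R) :
    f (Lw tpow n Ib It j i x) = Lw (fun m => f (tpow m)) n Ib It j i (f x) := by
  unfold Lw
  split_ifs <;> simp

lemma map_Pprod {R S : Type*} [CommRing R] [CommRing S] (f : R →+* S) (tpow : ℤ → R) (n M : ℕ)
    (j l : Fin M → ℕ) (I K : ℕ → ℕ) (x : R) :
    f (Pprod tpow n M j l I K x) = Pprod (fun m => f (tpow m)) n M j l I K (f x) := by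
  unfold Pprod
  split_ifs
  · simp only [map_prod, map_Lw, map_mul]
  · simp

/-- `ℚ(t)[x]` is embedded into its fraction field, so as to compute with field operations. -/
def emb : Polynomial (RatFunc ℚ) →+* RatFunc (RatFunc ℚ) :=
  algebraMap (Polynomial (RatFunc ℚ)) (RatFunc (RatFunc ℚ))

lemma emb_injective : Function.Injective emb := RatFunc.algebraMap_injective _

/-- The image of `t` under `emb`. -/
def tt : RatFunc (RatFunc ℚ) := emb (Polynomial.C RatFunc.X)

lemma emb_zpow (m : ℤ) : emb (Polynomial.C ((RatFunc.X : RatFunc ℚ) ^ m)) = tt ^ m :=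
  map_zpow₀ (emb.comp Polynomial.C) _ m

lemma tt_ne_zero : tt ≠ 0 :=
  (map_ne_zero (emb.comp Polynomial.C)).2 RatFunc.X_ne_zero

lemma tt_pow_ne_one (m : ℕ) (hm : m ≠ 0) : tt ^ m ≠ 1 := by
  intro h
  have h1 : (emb.comp Polynomial.C) (RatFunc.X ^ m) = (emb.comp Polynomial.C) 1 := by
    rw [map_pow, map_one]; exact h
  have h2 := (emb.comp Polynomial.C).injective h1
  rw [← RatFunc.algebraMap_X, ← map_pow, ← map_one (algebraMap (Polynomial ℚ) (RatFunc ℚ))] at h2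
  have h3 := congrArg Polynomial.natDegree (RatFunc.algebraMap_injective ℚ h2)
  simp at h3
  exact hm h3

lemma emb_gaussNat (a b : ℕ) :
    emb (Polynomial.C (algebraMap (Polynomial ℚ) (RatFunc ℚ)
      ((gaussNat a b).map (Int.castRingHom ℚ)))) = gv tt a b := by
  induction a generalizing b with
  | zero => cases b <;> simp [gaussNat, gv]
  | succ a ih =>
    cases b with
    | zero => simp [gaussNat, gv]
    | succ b =>
      rw [gaussNat, gv, ← ih, ← ih]
      simp [tt]

lemma emb_gbP (a b : ℕ) : emb (gbP a b) = gv tt a b := by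
  rw [gbP, gq, gaussInt]
  split_ifs with h
  · exact emb_gaussNat a b
  · rw [gv_eq_zero tt a b (by omega)]; simp

lemma emb_C_CJq (n M : ℕ) (J J' : ℕ → ℕ) (h : wrd n M J = wrdF n M J') :
    emb (Polynomial.C (CJq n M J)) = CF tt n M J' := by
  rw [CJq, h, CF, map_sum, map_sum]
  exact sum_congr rfl fun _ _ => emb_zpow _

/-- The product formula for the fused weights. -/
lemma emb_Lfused (n M : ℕ) (J L I K : ℕ → ℕ) (x : Polynomial (RatFunc ℚ))
    (hcons : ∀ a ∈ Icc 1 n, I a + J a = K a + L a)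
    (hJ : ∑ a ∈ Icc 1 n, J a ≤ M) (hL : ∑ a ∈ Icc 1 n, L a ≤ M) :
    emb (Lfused n M J L I K x) = Wf tt n M J L I K (emb x) := by
  set J' := Function.update J 0 (M - ∑ a ∈ Icc 1 n, J a) with hJ'
  set L' := Function.update L 0 (M - ∑ a ∈ Icc 1 n, L a) with hL'
  have hJe : ∀ a, 1 ≤ a → J' a = J a := fun a ha => Function.update_of_ne (by omega) _ _
  have hLe : ∀ a, 1 ≤ a → L' a = L a := fun a ha => Function.update_of_ne (by omega) _ _
  have hJs := update_sum n M J hJ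
  have hLs := update_sum n M L hL
  have hW : Wf tt n M J' L' I K (emb x) = Wf tt n M J L I K (emb x) := by
    refine prod_congr rfl fun k hk => ?_
    have hk' := (mem_Icc.1 hk).1
    have e1 : vv L' k = vv L k := sum_congr rfl fun a ha => hLe a (mem_Ico.1 ha).1
    have e2 : ∑ a ∈ Ioc k n, J' a = ∑ a ∈ Ioc k n, J a :=
      sum_congr rfl fun a ha => hJe a (by have := mem_Ioc.1 ha; omega)
    rw [Bf, Bf, e1, e2, hJe k hk', hLe k hk']
  have hsum := sum_XF tt tt_ne_zero tt_pow_ne_one n M J' L' I K (emb x) hJs hLs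
    (fun a ha => by
      rw [hJe a (mem_Icc.1 ha).1, hLe a (mem_Icc.1 ha).1]; exact hcons a ha)
  have hC := emb_C_CJq n M J J' (wrd_eq n M J hJ)
  have hCne := CF_ne_zero tt tt_ne_zero tt_pow_ne_one n M J' hJs
  have hCinv : emb (Polynomial.C (CJq n M J)⁻¹) = (CF tt n M J')⁻¹ := by
    rw [← hC]
    exact map_inv₀ (emb.comp Polynomial.C) _
  rw [Lfused, map_mul, hCinv, wrd_eq n M J hJ, wrd_eq n M L hL, sum_comm, ← hW]
  rw [inv_mul_eq_iff_eq_mul₀ hCne, ← hsum, map_sum]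
  refine sum_congr rfl fun l _ => ?_
  rw [map_sum, XF]
  refine sum_congr rfl fun j _ => ?_
  rw [map_mul, emb_zpow, map_Pprod]
  congr 2
  funext m
  exact emb_zpow m

lemma choose_two_int (k : ℕ) : ((k : ℤ) * ((k : ℤ) - 1)) / 2 = (k.choose 2 : ℕ) := by
  have h : (k : ℤ) * ((k : ℤ) - 1) = (k.choose 2 : ℕ) * 2 := by
    induction k with
    | zero => simp
    | succ k ih =>
      rw [Nat.choose_succ_succ' k 1, Nat.choose_one_right]
      push_cast
      linarith
  rw [h, Int.mul_ediv_cancel _ (by norm_num)]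

lemma emb_bfun (p q a c v : ℕ) (w : ℤ) (hw : w - q = v) (x z : Polynomial (RatFunc ℚ)) :
    emb (bfun tpowP gbP p q a c x z w) =
      tt ^ ((v : ℤ) * ((c : ℤ) - p)) * be tt q a c (tt ^ v * emb x) (emb z) := by
  rw [bfun, be, map_sum, mul_sum]
  refine sum_congr rfl fun k hk => ?_
  have hk' := mem_range.1 hk
  have e1 : (q : ℤ) - k = ((q - k : ℕ) : ℤ) := by omega
  have e2 : (c : ℤ) + k = ((c + k : ℕ) : ℤ) := by push_cast; rfl
  have e3 : (v : ℤ) * (((c + k : ℕ) : ℤ) - p) = v * ((c : ℤ) - p) + ((v * k : ℕ) : ℤ) := by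
    push_cast; ring
  rw [hw, choose_two_int, e1, e2, e3]
  simp only [map_mul, map_pow, emb_gbP]
  rw [tpowP, emb_zpow, zpow_add₀ tt_ne_zero, zpow_add₀ tt_ne_zero, zpow_natCast, zpow_natCast,
    ec, mul_pow, pow_mul]
  ring

end Transfer

theorem statement18 (n M : ℕ) (hn : 2 ≤ n) (hM : 1 ≤ M) (J L I K : ℕ → ℕ)
    (hcons : ∀ a ∈ Finset.Icc 1 n, I a + J a = K a + L a)
    (hJ : ∑ a ∈ Finset.Icc 1 n, J a ≤ M) (hL : ∑ a ∈ Finset.Icc 1 n, L a ≤ M)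
    (hJL : J n + ∑ a ∈ Finset.Icc 1 (n - 1), L a ≤ M) :
    Lfused n M J L I K Polynomial.X =
      bfun tpowP gbP (J n) (L n) (I n) (K n) Polynomial.X
          (-(Polynomial.C ((RatFunc.X : RatFunc ℚ) ^ (M : ℤ)) * Polynomial.X))
          (∑ a ∈ Finset.Icc 1 n, L a) *
        Lfused (n - 1) (M - J n) J L I K
          (Polynomial.C ((RatFunc.X : RatFunc ℚ) ^ (J n : ℤ)) * Polynomial.X) := by
  have hsplit : ∀ f : ℕ → ℕ, ∑ a ∈ Icc 1 n, f a = ∑ a ∈ Icc 1 (n - 1), f a + f n := by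
    intro f
    obtain ⟨m, rfl⟩ : ∃ m, n = m + 1 := ⟨n - 1, by omega⟩
    rw [sum_Icc_succ_top (by omega)]; rfl
  have hJs := hsplit J
  have hLs := hsplit L
  apply emb_injective
  have hvv : vv L n = ∑ a ∈ Icc 1 (n - 1), L a :=
    sum_congr (by ext; simp; omega) fun _ _ => rfl
  rw [map_mul, emb_Lfused n M J L I K _ hcons hJ hL,
    emb_Lfused (n - 1) (M - J n) J L I K _
      (fun a ha => hcons a (by simp at ha ⊢; omega)) (by omega) (by omega),
    emb_bfun (J n) (L n) (I n) (K n) (vv L n) _ (by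
      rw [hvv]; zify at hLs; push_cast; linarith)]
  rw [map_neg, map_mul, map_mul, emb_zpow, emb_zpow, zpow_natCast, zpow_natCast]
  obtain ⟨m, rfl⟩ : ∃ m, n = m + 1 := ⟨n - 1, by omega⟩
  rw [Wf, prod_Icc_succ_top (by omega), mul_comm]
  congr 1
  · simp [Bf]
  · refine prod_congr rfl fun k hk => ?_
    have hk' := (mem_Icc.1 hk).2
    have h1 : tt ^ (M - J (m + 1)) * (tt ^ J (m + 1) * emb Polynomial.X) =
        tt ^ M * emb Polynomial.X := by
      rw [← mul_assoc, ← pow_add, Nat.sub_add_cancel (by omega)]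
    rw [Bf, Bf, h1, sum_Ioc_succ_top (by omega)]
    simp only [Nat.add_sub_cancel]
    congr 2
    ring
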